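/- For a real number r and positive reals a, b, let M_r(a, b; 2/3) denote the weighted power mean with weights 2/3 and 1/3: M_r(a, b; 2/3) = ((2/3)·a^r + (1/3)·b^r)^(1/r) if r ≠ 0, and M_0(a, b; 2/3) = a^(2/3)·b^(1/3). Then for real numbers α, β, the double inequality M_α(1, cos x; 2/3) < sin(x)/x < M_β(1, cos x; 2/3) holds for every x ∈ (0, π/2) if and only if α ≤ 4/5 and β ≥ (ln 3 − ln 2)/(ln π − ln 2). -/

import Mathlib

open Real Set

/-- The weighted power mean of `a` and `b` with weights `2/3` and `1/3`. -/
noncomputable def weightedPowerMean (r a b : ℝ) : ℝ :=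
  if r = 0 then a ^ ((2 : ℝ) / 3) * b ^ ((1 : ℝ) / 3)
  else (2 / 3 * a ^ r + 1 / 3 * b ^ r) ^ (1 / r)


noncomputable def cosT (n : ℕ) (x : ℝ) : ℝ := ∑ k ∈ Finset.range n, (-1) ^ k * x ^ (2 * k) / (2 * k).factorial
noncomputable def sinT (n : ℕ) (x : ℝ) : ℝ := ∑ k ∈ Finset.range n, (-1) ^ k * x ^ (2 * k + 1) / (2 * k + 1).factorial

theorem hasDerivAt_sinT (n : ℕ) (x : ℝ) : HasDerivAt (sinT n) (cosT n x) x := by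
  unfold sinT cosT
  refine HasDerivAt.fun_sum fun k _ => ?_
  have := ((hasDerivAt_pow (2 * k + 1) x).const_mul ((-1 : ℝ) ^ k)).div_const ((2 * k + 1).factorial : ℝ)
  convert! this using 1
  have h1 : ((2 * k).factorial : ℝ) ≠ 0 := by positivity
  rw [Nat.factorial_succ]
  push_cast
  field_simp

theorem hasDerivAt_cosT (n : ℕ) (x : ℝ) : HasDerivAt (cosT (n + 1)) (-sinT n x) x := by
  unfold sinT cosT
  have h0 : HasDerivAt (fun x : ℝ => ∑ k ∈ Finset.range n,
      (-1 : ℝ) ^ (k + 1) * x ^ (2 * (k + 1)) / (2 * (k + 1)).factorial)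
      (-∑ k ∈ Finset.range n, (-1) ^ k * x ^ (2 * k + 1) / (2 * k + 1).factorial) x := by
    rw [← Finset.sum_neg_distrib]
    refine HasDerivAt.fun_sum fun k _ => ?_
    have := ((hasDerivAt_pow (2 * k + 2) x).const_mul ((-1 : ℝ) ^ (k + 1))).div_const ((2 * k + 2).factorial : ℝ)
    convert! this using 1
    have h1 : ((2 * k + 1).factorial : ℝ) ≠ 0 := by positivity
    rw [Nat.factorial_succ (2 * k + 1)]
    push_cast
    field_simp
    simp [pow_succ]
    ring
  have := h0.add_const 1
  convert! this using 1
  funext y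
  rw [Finset.sum_range_succ']
  simp

theorem nonneg_of_deriv {f f' : ℝ → ℝ} (h0 : f 0 = 0) (hd : ∀ x, HasDerivAt f (f' x) x)
    (hn : ∀ x, 0 ≤ x → 0 ≤ f' x) : ∀ x, 0 ≤ x → 0 ≤ f x := by
  intro x hx
  have : MonotoneOn f (Ici 0) := by
    apply monotoneOn_of_deriv_nonneg (convex_Ici 0)
    · exact fun y _ => (hd y).continuousAt.continuousWithinAt
    · exact fun y _ => (hd y).differentiableAt.differentiableWithinAt
    · intro y hy
      rw [interior_Ici] at hy
      rw [(hd y).deriv]; exact hn y (le_of_lt hy)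
  have := this (mem_Ici.2 le_rfl) (mem_Ici.2 hx) hx
  linarith

theorem taylor_bounds (n : ℕ) : (∀ x, 0 ≤ x → 0 ≤ (-1) ^ (n + 1) * (cos x - cosT (n + 1) x)) ∧
    (∀ x, 0 ≤ x → 0 ≤ (-1) ^ (n + 1) * (sin x - sinT (n + 1) x)) := by
  have key : ∀ n : ℕ, (∀ x, 0 ≤ x → 0 ≤ (-1) ^ (n + 1) * (cos x - cosT (n + 1) x)) →
    (∀ x, 0 ≤ x → 0 ≤ (-1) ^ (n + 1) * (sin x - sinT (n + 1) x)) := by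
    intro n h
    refine nonneg_of_deriv (by simp [sinT]) (fun x => ?_) h
    exact (((hasDerivAt_sin x).sub (hasDerivAt_sinT (n + 1) x)).const_mul _)
  induction n with
  | zero =>
    have : ∀ x : ℝ, 0 ≤ x → 0 ≤ (-1) ^ (0 + 1) * (cos x - cosT (0 + 1) x) := by
      intro x _
      have := cos_le_one x
      simp [cosT]; linarith
    exact ⟨this, key 0 this⟩
  | succ n ih =>
    have : ∀ x : ℝ, 0 ≤ x → 0 ≤ (-1) ^ (n + 1 + 1) * (cos x - cosT (n + 1 + 1) x) := by
      refine nonneg_of_deriv (f' := fun x => (-1) ^ (n + 1) * (sin x - sinT (n + 1) x)) ?_ (fun x => ?_) ih.2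
      · simp [cosT, Finset.sum_range_succ']
      · have := (((hasDerivAt_cos x).sub (hasDerivAt_cosT (n + 1) x)).const_mul ((-1 : ℝ) ^ (n + 1 + 1)))
        convert! this using 1
        ring
    exact ⟨this, key _ this⟩

theorem poly_D {t : ℝ} (h0 : 0 < t) (h1 : t < 5 / 2) :
    0 < ((2/3) * t ^ 1 + (-2/15) * t ^ 2 + (4/315) * t ^ 3 + (-2/2835) * t ^ 4) ^ 3 - 2 * ((1/3) * t ^ 1 + (-1/30) * t ^ 2 + (1/840) * t ^ 3 + (-1/45360) * t ^ 4 + (1/3628800) * t ^ 5) ^ 2 * ((4/3) * t ^ 1 + (-8/15) * t ^ 2 + (8/105) * t ^ 3 + (-16/2835) * t ^ 4 + (4/14175) * t ^ 5) := by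
  have h2 : 0 < 5 / 2 - t := by linarith
  have : ((2/3) * t ^ 1 + (-2/15) * t ^ 2 + (4/315) * t ^ 3 + (-2/2835) * t ^ 4) ^ 3 - 2 * ((1/3) * t ^ 1 + (-1/30) * t ^ 2 + (1/840) * t ^ 3 + (-1/45360) * t ^ 4 + (1/3628800) * t ^ 5) ^ 2 * ((4/3) * t ^ 1 + (-8/15) * t ^ 2 + (8/105) * t ^ 3 + (-16/2835) * t ^ 4 + (4/14175) * t ^ 5) = t ^ 5 * ((32768/46142578125) * t ^ 0 * (5 / 2 - t) ^ 10 + (868352/138427734375) * t ^ 1 * (5 / 2 - t) ^ 9 + (72485648/2906982421875) * t ^ 2 * (5 / 2 - t) ^ 8 + (73168708/1245849609375) * t ^ 3 * (5 / 2 - t) ^ 7 + (33242914883/366279785156250) * t ^ 4 * (5 / 2 - t) ^ 6 + (84514088173/879071484375000) * t ^ 5 * (5 / 2 - t) ^ 5 + (59654059237993/843908625000000000) * t ^ 6 * (5 / 2 - t) ^ 4 + (90168117210001/2531725875000000000) * t ^ 7 * (5 / 2 - t) ^ 3 + (178727050345769/15190355250000000000) * t ^ 8 * (5 / 2 - t)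 ^ 2 + (34951290941251/15190355250000000000) * t ^ 9 * (5 / 2 - t) ^ 1 + (10531413141569/52081218000000000000) * t ^ 10 * (5 / 2 - t) ^ 0) := by
    ring
  rw [this]
  positivity


theorem poly_E {t : ℝ} (h0 : 0 < t) (h1 : t < 5 / 2) :
    0 < (8/105) * t ^ 4 + (-4/225) * t ^ 5 + (101/51975) * t ^ 6 + (-5952431/23247544320) * t ^ 7 := by
  have h2 : 0 < 5 / 2 - t := by linarith
  have : (8/105) * t ^ 4 + (-4/225) * t ^ 5 + (101/51975) * t ^ 6 + (-5952431/23247544320) * t ^ 7 = t ^ 4 * ((64/13125) * t ^ 0 * (5 / 2 - t) ^ 3 + (464/39375) * t ^ 1 * (5 / 2 - t) ^ 2 + (12626/1299375) * t ^ 2 * (5 / 2 - t) ^ 1 + (296754581/116237721600) * t ^ 3 * (5 / 2 - t) ^ 0) := by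
    ring
  rw [this]
  positivity


/-- numerator functions -/
noncomputable def fA (x : ℝ) : ℝ := sin x - x * cos x
noncomputable def fB (x : ℝ) : ℝ := x - sin x * cos x
noncomputable def fh (x : ℝ) : ℝ := x * cos x / fA x - 2 * (sin x * cos x) / fB x

theorem cos_ub (n : ℕ) {x : ℝ} (hx : 0 ≤ x) : cos x ≤ cosT (2 * n + 1) x := by
  have := (taylor_bounds (2 * n)).1 x hx
  rw [pow_succ, pow_mul] at this; norm_num at this; linarith
theorem sin_ub (n : ℕ) {x : ℝ} (hx : 0 ≤ x) : sin x ≤ sinT (2 * n + 1) x := by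
  have := (taylor_bounds (2 * n)).2 x hx
  rw [pow_succ, pow_mul] at this; norm_num at this; linarith
theorem cos_lb (n : ℕ) {x : ℝ} (hx : 0 ≤ x) : cosT (2 * n + 2) x ≤ cos x := by
  have := (taylor_bounds (2 * n + 1)).1 x hx
  rw [pow_succ, pow_succ, pow_mul] at this; norm_num at this; linarith
theorem sin_lb (n : ℕ) {x : ℝ} (hx : 0 ≤ x) : sinT (2 * n + 2) x ≤ sin x := by
  have := (taylor_bounds (2 * n + 1)).2 x hx
  rw [pow_succ, pow_succ, pow_mul] at this; norm_num at this; linarith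

theorem fA_pos {x : ℝ} (h0 : 0 < x) (h1 : x < π / 2) : 0 < fA x := by
  have hc : 0 < cos x := cos_pos_of_mem_Ioo ⟨by linarith, h1⟩
  have := lt_tan h0 h1
  rw [tan_eq_sin_div_cos, lt_div_iff₀ hc] at this
  unfold fA; linarith

theorem fB_pos {x : ℝ} (h0 : 0 < x) : 0 < fB x := by
  have := sin_lt (x := 2 * x) (by linarith)
  rw [sin_two_mul] at this
  unfold fB; linarith

theorem sq_lt_of {x : ℝ} (h0 : 0 < x) (h1 : x < π / 2) : x ^ 2 < 5 / 2 := by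
  have := pi_lt_d2
  nlinarith

theorem key_D {x : ℝ} (h0 : 0 < x) (h1 : x < π / 2) :
    2 * fA x ^ 2 * (sin x * cos x - x * cos (2 * x)) < fB x ^ 3 := by
  have hA := fA_pos h0 h1
  have hB := fB_pos h0
  set e := sin x * cos x - x * cos (2 * x) with he
  rcases le_or_gt e 0 with h | h
  · have : 2 * fA x ^ 2 * e ≤ 0 := mul_nonpos_of_nonneg_of_nonpos (by positivity) h
    exact this.trans_lt (by positivity)
  have hx2 := sq_lt_of h0 h1
  have hp := poly_D (t := x ^ 2) (by positivity) hx2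
  have s1 := sin_ub 2 h0.le
  have c1 := cos_lb 2 h0.le
  have s2 := sin_ub 2 (x := 2 * x) (by positivity)
  have c2 := cos_lb 2 (x := 2 * x) (by positivity)
  have c1' := mul_le_mul_of_nonneg_left c1 h0.le
  have c2' := mul_le_mul_of_nonneg_left c2 h0.le
  rw [sin_two_mul] at s2
  simp [sinT, cosT, Finset.sum_range_succ, Nat.factorial] at s1 c1' s2 c2'
  set b := (2/3) * (x ^ 2) ^ 1 + (-2/15) * (x ^ 2) ^ 2 + (4/315) * (x ^ 2) ^ 3 + (-2/2835) * (x ^ 2) ^ 4 with hb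
  set a := (1/3) * (x ^ 2) ^ 1 + (-1/30) * (x ^ 2) ^ 2 + (1/840) * (x ^ 2) ^ 3 + (-1/45360) * (x ^ 2) ^ 4 + (1/3628800) * (x ^ 2) ^ 5 with ha
  set f := (4/3) * (x ^ 2) ^ 1 + (-8/15) * (x ^ 2) ^ 2 + (8/105) * (x ^ 2) ^ 3 + (-16/2835) * (x ^ 2) ^ 4 + (4/14175) * (x ^ 2) ^ 5 with hf
  have hbB : x * b ≤ fB x := by unfold fB; rw [hb]; linarith
  have haA : fA x ≤ x * a := by unfold fA; rw [ha]; linarith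
  have hfE : e ≤ x * f := by rw [he, hf]; linarith
  clear s1 c1 s2 c2 c1' c2'
  clear_value b a f
  have h3 : (x * b) ^ 3 ≤ fB x ^ 3 := (Odd.strictMono_pow (by decide : Odd 3)).monotone hbB
  have h4 : fA x ^ 2 ≤ (x * a) ^ 2 := by gcongr
  have h5 : 2 * fA x ^ 2 * e ≤ 2 * (x * a) ^ 2 * (x * f) := by gcongr
  have h6 : 0 < x ^ 3 * (b ^ 3 - 2 * a ^ 2 * f) := mul_pos (by positivity) hp
  have h7 : x ^ 3 * (b ^ 3 - 2 * a ^ 2 * f) = (x * b) ^ 3 - 2 * (x * a) ^ 2 * (x * f) := by ring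
  linarith

noncomputable def fE (x : ℝ) : ℝ := -6 * x ^ 2 * cos x - x * sin (3 * x) + 9 / 4 * (cos x - cos (3 * x))

theorem fE_pos {x : ℝ} (h0 : 0 < x) (h1 : x < π / 2) : 0 < fE x := by
  have hx2 := sq_lt_of h0 h1
  have hp := poly_E (t := x ^ 2) (by positivity) hx2
  have c1 := mul_le_mul_of_nonneg_left (cos_ub 3 h0.le) (sq_nonneg x)
  have s1 := mul_le_mul_of_nonneg_left (sin_ub 3 (x := 3 * x) (by positivity)) h0.le
  have c2 := cos_lb 3 h0.le
  have c3 := cos_ub 3 (x := 3 * x) (by positivity)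
  simp [sinT, cosT, Finset.sum_range_succ, Nat.factorial] at c1 s1 c2 c3
  unfold fE
  linarith

theorem fE_le {x : ℝ} (h0 : 0 < x) (h1 : x < 1) : fE x ≤ x ^ 8 := by
  have c1 := mul_le_mul_of_nonneg_left (cos_lb 2 h0.le) (sq_nonneg x)
  have s1 := mul_le_mul_of_nonneg_left (sin_lb 2 (x := 3 * x) (by positivity)) h0.le
  have c2 := cos_ub 3 h0.le
  have c3 := cos_lb 2 (x := 3 * x) (by positivity)
  simp [sinT, cosT, Finset.sum_range_succ, Nat.factorial] at c1 s1 c2 c3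
  unfold fE
  have e1 : x ^ 10 ≤ x ^ 8 := pow_le_pow_of_le_one h0.le h1.le (by norm_num)
  have e2 : x ^ 12 ≤ x ^ 8 := pow_le_pow_of_le_one h0.le h1.le (by norm_num)
  have : 0 ≤ x ^ 10 := by positivity
  have : 0 ≤ x ^ 12 := by positivity
  have : 0 ≤ x ^ 8 := by positivity
  linarith

theorem fE_eq (x : ℝ) : fA x * fB x - 5 * (x * cos x * fB x - 2 * (sin x * cos x) * fA x) = fE x := by
  unfold fE fA fB
  rw [sin_three_mul, cos_three_mul]
  have := sin_sq_add_cos_sq x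
  have hs : sin x ^ 3 = sin x * (1 - cos x ^ 2) := by rw [← this]; ring
  rw [hs]
  have hs : sin x ^ 2 = (1 - cos x ^ 2) := by rw [← this]; ring
  linear_combination 9 * cos x * hs

theorem fh_eq {x : ℝ} (h0 : 0 < x) (h1 : x < π / 2) : fh x = 1 / 5 - fE x / (5 * (fA x * fB x)) := by
  have hA := fA_pos h0 h1
  have hB := fB_pos h0
  rw [← fE_eq]; unfold fh
  field_simp; ring

theorem fh_lt {x : ℝ} (h0 : 0 < x) (h1 : x < π / 2) : fh x < 1 / 5 := by
  have hA := fA_pos h0 h1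
  have hB := fB_pos h0
  have hE := fE_pos h0 h1
  rw [fh_eq h0 h1]
  have : 0 < fE x / (5 * (fA x * fB x)) := by positivity
  linarith

theorem A_bounds {x : ℝ} (h0 : 0 < x) : x ^ 3 / 3 - x ^ 5 / 30 ≤ fA x ∧ fA x ≤ x ^ 3 / 3 := by
  have d : ∀ y, HasDerivAt fA (y * sin y) y := by
    intro y
    have := (hasDerivAt_sin y).sub ((hasDerivAt_id y).mul (hasDerivAt_cos y))
    refine HasDerivAt.congr_deriv this ?_
    simp
  constructor
  · have := nonneg_of_deriv (f := fun y => fA y - (y ^ 3 / 3 - y ^ 5 / 30)) (f' := fun y => y * sin y - (y ^ 2 - y ^ 4 / 6))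
      (by simp [fA]) (fun y => by
        refine ((d y).sub (((hasDerivAt_pow 3 y).div_const 3).sub ((hasDerivAt_pow 5 y).div_const 30))).congr_deriv ?_
        push_cast; ring) (fun y hy => by
        have := mul_le_mul_of_nonneg_left (sin_lb 0 hy) hy
        simp [sinT, Finset.sum_range_succ, Nat.factorial] at this
        linarith) x h0.le
    linarith
  · have := nonneg_of_deriv (f := fun y => y ^ 3 / 3 - fA y) (f' := fun y => y ^ 2 - y * sin y)
      (by simp [fA]) (fun y => by
        refine (((hasDerivAt_pow 3 y).div_const 3).sub (d y)).congr_deriv ?_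
        push_cast; ring) (fun y hy => by
        have := mul_le_mul_of_nonneg_left (sin_ub 0 hy) hy
        simp [sinT] at this
        linarith) x h0.le
    linarith

theorem B_bounds {x : ℝ} (h0 : 0 < x) : 2 * x ^ 3 / 3 - 2 * x ^ 5 / 15 ≤ fB x ∧ fB x ≤ 2 * x ^ 3 / 3 := by
  have s1 := sin_ub 1 (x := 2 * x) (by positivity)
  have s2 := sin_lb 0 (x := 2 * x) (by positivity)
  rw [sin_two_mul] at s1 s2
  simp [sinT, Finset.sum_range_succ, Nat.factorial] at s1 s2
  unfold fB
  constructor <;> linarith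

theorem fh_gt {x : ℝ} (h0 : 0 < x) (h1 : x < 1) : 1 / 5 - 2 * x ^ 2 ≤ fh x := by
  have hpi : x < π / 2 := by linarith [pi_gt_three]
  have hA := fA_pos h0 hpi
  have hB := fB_pos h0
  have e : x ^ 5 ≤ x ^ 3 := pow_le_pow_of_le_one h0.le h1.le (by norm_num)
  have a1 : 3 / 10 * x ^ 3 ≤ fA x := by linarith [(A_bounds h0).1]
  have b1 : 1 / 2 * x ^ 3 ≤ fB x := by linarith [(B_bounds h0).1]
  have h3 : (3 / 10 * x ^ 3) * (1 / 2 * x ^ 3) ≤ fA x * fB x := by gcongr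
  rw [fh_eq h0 hpi]
  have : fE x / (5 * (fA x * fB x)) ≤ 2 * x ^ 2 := by
    rw [div_le_iff₀ (by positivity)]
    refine (fE_le h0 h1).trans ?_
    have : 2 * x ^ 2 * (5 * ((3 / 10 * x ^ 3) * (1 / 2 * x ^ 3))) ≤ 2 * x ^ 2 * (5 * (fA x * fB x)) := by gcongr
    have : 0 ≤ x ^ 8 := by positivity
    linarith
  linarith

theorem hasDerivAt_fA (y : ℝ) : HasDerivAt fA (y * sin y) y := by
  have := (hasDerivAt_sin y).sub ((hasDerivAt_id y).mul (hasDerivAt_cos y))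
  refine HasDerivAt.congr_deriv this ?_
  simp

theorem hasDerivAt_sc (y : ℝ) : HasDerivAt (fun x => sin x * cos x) (cos (2 * y)) y := by
  have := ((hasDerivAt_sin y).mul (hasDerivAt_cos y))
  refine HasDerivAt.congr_deriv this ?_
  rw [cos_two_mul']; ring

theorem hasDerivAt_fB (y : ℝ) : HasDerivAt fB (2 * sin y ^ 2) y := by
  have := (hasDerivAt_id y).sub (hasDerivAt_sc y)
  refine HasDerivAt.congr_deriv this ?_
  rw [cos_two_mul, cos_sq']; ring

theorem fh_anti : StrictAntiOn fh (Ioo 0 (π / 2)) := by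
  have d : ∀ x ∈ Ioo 0 (π / 2), HasDerivAt fh
      ((2 * fA x ^ 2 * (sin x * cos x - x * cos (2 * x)) - fB x ^ 3) / (fA x ^ 2 * fB x ^ 2)) x := by
    intro x hx
    have hA := fA_pos hx.1 hx.2
    have hB := fB_pos hx.1
    have := (((hasDerivAt_id x).mul (hasDerivAt_cos x)).div (hasDerivAt_fA x) hA.ne').sub
      (((hasDerivAt_sc x).const_mul 2).div (hasDerivAt_fB x) hB.ne')
    refine HasDerivAt.congr_deriv this ?_
    have h1 : (1 * cos x + x * (-sin x)) * fA x - (x * cos x) * (x * sin x) = - fB x := by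
      unfold fA fB
      linear_combination (-x) * sin_sq_add_cos_sq x
    have h2 : (2 * cos (2 * x)) * fB x - (2 * (sin x * cos x)) * (2 * sin x ^ 2)
        = -2 * (sin x * cos x - x * cos (2 * x)) := by
      unfold fB
      rw [cos_two_mul]
      linear_combination (-4 * sin x * cos x) * sin_sq_add_cos_sq x
    simp only [id, Pi.mul_apply]
    rw [h1, h2]
    field_simp
    ring
  apply strictAntiOn_of_deriv_neg (convex_Ioo _ _)
  · exact fun y hy => (d y hy).continuousAt.continuousWithinAt
  · intro y hy
    rw [interior_Ioo] at hy
    rw [(d y hy).deriv]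
    have hA := fA_pos hy.1 hy.2
    have hB := fB_pos hy.1
    have := key_D hy.1 hy.2
    exact div_neg_of_neg_of_pos (by linarith) (by positivity)

open Filter Topology

theorem slope_lim {f f' : ℝ → ℝ} {a b la lb : ℝ} (hab : a < b)
    (hf : ∀ x ∈ Ioo a b, HasDerivAt f (f' x) x)
    (ha : Tendsto f (𝓝[>] a) (𝓝 la)) (hb : Tendsto f (𝓝[<] b) (𝓝 lb)) :
    ∃ c ∈ Ioo a b, (b - a) * f' c = lb - la := by
  obtain ⟨c, hc, h⟩ := exists_ratio_hasDerivAt_eq_ratio_slope' (f := f) (f' := f') (g := id) (g' := fun _ => 1)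
    hab hf (fun x _ => hasDerivAt_id x) ha
    (tendsto_id.mono_left nhdsWithin_le_nhds) hb (tendsto_id.mono_left nhdsWithin_le_nhds)
  exact ⟨c, hc, by simpa using h⟩

noncomputable def fG (r x : ℝ) : ℝ := log (fB x) - log (2 * fA x) - (1 - r) * log (cos x)
noncomputable def fF (r x : ℝ) : ℝ := log (sin x) - log x - 1 / r * log (2 / 3 + 1 / 3 * cos x ^ r)

theorem hasDerivAt_fG (r : ℝ) {x : ℝ} (hx : x ∈ Ioo 0 (π / 2)) :
    HasDerivAt (fG r) (sin x / cos x * ((1 - r) - fh x)) x := by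
  have hc : 0 < cos x := cos_pos_of_mem_Ioo ⟨by linarith [hx.1, pi_pos], hx.2⟩
  have hA := fA_pos hx.1 hx.2
  have hB := fB_pos hx.1
  have := (((hasDerivAt_fB x).log hB.ne').sub (((hasDerivAt_fA x).const_mul 2).log (by positivity))).sub
    (((hasDerivAt_cos x).log hc.ne').const_mul (1 - r))
  refine HasDerivAt.congr_deriv this ?_
  unfold fh
  field_simp
  ring

theorem hasDerivAt_fF {r : ℝ} (hr : 0 < r) {x : ℝ} (hx : x ∈ Ioo 0 (π / 2)) :
    HasDerivAt (fF r) ((cos x ^ (r - 1) * fB x - 2 * fA x) / (x * sin x * (2 + cos x ^ r))) x := by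
  have hx0 := hx.1
  have hc : 0 < cos x := cos_pos_of_mem_Ioo ⟨by linarith [hx.1, pi_pos], hx.2⟩
  have hs : 0 < sin x := sin_pos_of_pos_of_lt_pi hx.1 (by linarith [hx.1, hx.2, pi_pos])
  have hp : 0 < cos x ^ r := rpow_pos_of_pos hc r
  have h1 := ((hasDerivAt_cos x).rpow_const (p := r) (Or.inl hc.ne'))
  have := (((hasDerivAt_sin x).log hs.ne').sub (hasDerivAt_log hx0.ne')).sub
    ((((h1.const_mul (1 / 3)).const_add (2 / 3)).log (by positivity)).const_mul (1 / r))
  refine HasDerivAt.congr_deriv this ?_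
  have e : cos x ^ r = cos x ^ (r - 1) * cos x := by
    rw [← rpow_add_one hc.ne']; ring_nf
  have hq : 0 < cos x ^ (r - 1) := rpow_pos_of_pos hc _
  rw [e]
  generalize cos x ^ (r - 1) = q at *
  have h2 : 2 / 3 + 1 / 3 * (q * cos x) = (2 + q * cos x) / 3 := by ring
  rw [h2]
  have h3 : 2 + q * cos x ≠ 0 := by positivity
  unfold fA fB
  field_simp
  linear_combination (x * q) * sin_sq_add_cos_sq x

theorem exp_fG {r x : ℝ} (hx : x ∈ Ioo 0 (π / 2)) :
    log (cos x ^ (r - 1) * fB x) - log (2 * fA x) = fG r x := by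
  have hc : 0 < cos x := cos_pos_of_mem_Ioo ⟨by linarith [hx.1, pi_pos], hx.2⟩
  have hB := fB_pos hx.1
  rw [log_mul (rpow_pos_of_pos hc _).ne' hB.ne', log_rpow hc]
  unfold fG; ring

theorem fG_pos_iff {r x : ℝ} (hx : x ∈ Ioo 0 (π / 2)) :
    0 < fG r x ↔ 2 * fA x < cos x ^ (r - 1) * fB x := by
  have hc : 0 < cos x := cos_pos_of_mem_Ioo ⟨by linarith [hx.1, pi_pos], hx.2⟩
  have hA := fA_pos hx.1 hx.2
  have hB := fB_pos hx.1
  have := rpow_pos_of_pos hc (r - 1)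
  rw [← exp_fG hx, sub_pos, log_lt_log_iff (by positivity) (by positivity)]

theorem fG_neg_iff {r x : ℝ} (hx : x ∈ Ioo 0 (π / 2)) :
    fG r x < 0 ↔ cos x ^ (r - 1) * fB x < 2 * fA x := by
  have hc : 0 < cos x := cos_pos_of_mem_Ioo ⟨by linarith [hx.1, pi_pos], hx.2⟩
  have hA := fA_pos hx.1 hx.2
  have hB := fB_pos hx.1
  have := rpow_pos_of_pos hc (r - 1)
  rw [← exp_fG hx, sub_neg, log_lt_log_iff (by positivity) (by positivity)]

theorem fG_tendsto (r : ℝ) : Tendsto (fG r) (𝓝[>] 0) (𝓝 0) := by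
  have hlim : Tendsto (fun x => fB x / (2 * fA x)) (𝓝[>] 0) (𝓝 1) := by
    have l1 : Tendsto (fun x : ℝ => 1 - x ^ 2 / 5) (𝓝[>] 0) (𝓝 1) := by
      have : ContinuousAt (fun x : ℝ => 1 - x ^ 2 / 5) 0 := by fun_prop
      have := this.tendsto
      norm_num at this
      exact this.mono_left nhdsWithin_le_nhds
    have l2 : Tendsto (fun x : ℝ => 1 / (1 - x ^ 2 / 10)) (𝓝[>] 0) (𝓝 1) := by
      have : ContinuousAt (fun x : ℝ => 1 / (1 - x ^ 2 / 10)) 0 := by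
        apply ContinuousAt.div <;> first | fun_prop | norm_num
      have := this.tendsto
      norm_num at this
      simpa using this.mono_left nhdsWithin_le_nhds
    have ev : ∀ᶠ x : ℝ in 𝓝[>] 0, x ∈ Ioo (0 : ℝ) 1 := Ioo_mem_nhdsGT one_pos
    refine tendsto_of_tendsto_of_tendsto_of_le_of_le' l1 l2 ?_ ?_
    · filter_upwards [ev] with x hx
      have hA := fA_pos hx.1 (by linarith [hx.2, pi_gt_three])
      rw [le_div_iff₀ (by positivity)]
      have h1 := (A_bounds hx.1).2
      have h2 := (B_bounds hx.1).1
      have : 0 ≤ 1 - x ^ 2 / 5 := by nlinarith [hx.1, hx.2]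
      have := mul_le_mul_of_nonneg_left h1 this
      linarith
    · filter_upwards [ev] with x hx
      have hA := fA_pos hx.1 (by linarith [hx.2, pi_gt_three])
      have h3 : 0 < 1 - x ^ 2 / 10 := by nlinarith [hx.1, hx.2]
      rw [div_le_div_iff₀ (by positivity) h3]
      have h1 := (A_bounds hx.1).1
      have h2 := (B_bounds hx.1).2
      have := mul_le_mul_of_nonneg_right h2 h3.le
      linarith
  have h1 : Tendsto (fun x => log (fB x / (2 * fA x)) - (1 - r) * log (cos x)) (𝓝[>] 0) (𝓝 0) := by
    have a := (continuousAt_log (x := 1) one_ne_zero).tendsto.comp hlim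
    have b : ContinuousAt (fun x => (1 - r) * log (cos x)) 0 := by
      have : cos (0 : ℝ) ≠ 0 := by simp
      fun_prop (disch := assumption)
    have b := b.tendsto.mono_left (nhdsWithin_le_nhds (s := Ioi 0))
    simpa using a.sub b
  refine h1.congr' ?_
  filter_upwards [Ioo_mem_nhdsGT one_pos] with x hx
  have hA := fA_pos hx.1 (by linarith [hx.2, pi_gt_three])
  have hB := fB_pos hx.1
  rw [log_div hB.ne' (by positivity)]
  rfl

theorem fF_tendsto_zero {r : ℝ} (hr : 0 < r) : Tendsto (fF r) (𝓝[>] 0) (𝓝 0) := by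
  have c : ContinuousAt (fun x => log (sinc x) - 1 / r * log (2 / 3 + 1 / 3 * cos x ^ r)) 0 := by
    have h1 : sinc (0 : ℝ) ≠ 0 := by simp
    have h2 : 2 / 3 + 1 / 3 * cos (0 : ℝ) ^ r ≠ 0 := by norm_num
    have h3 : ContinuousAt (fun x => cos x ^ r) 0 :=
      continuous_cos.continuousAt.rpow_const (Or.inr hr.le)
    have h4 : ContinuousAt sinc 0 := continuous_sinc.continuousAt
    exact (h4.log h1).sub (continuousAt_const.mul
      ((continuousAt_const.add (continuousAt_const.mul h3)).log h2))
  have t := c.tendsto.mono_left (nhdsWithin_le_nhds (s := Ioi 0))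
  norm_num at t
  refine t.congr' ?_
  filter_upwards [Ioo_mem_nhdsGT one_pos] with x hx
  have hs : 0 < sin x := sin_pos_of_pos_of_lt_pi hx.1 (by linarith [hx.2, pi_gt_three])
  rw [sinc_of_ne_zero hx.1.ne', log_div hs.ne' hx.1.ne']
  unfold fF; norm_num

theorem fF_tendsto_half {r : ℝ} (hr : 0 < r) :
    Tendsto (fF r) (𝓝[<] (π / 2)) (𝓝 (-log (π / 2) - 1 / r * log (2 / 3))) := by
  have hp := pi_pos
  have h1 : sin (π / 2) ≠ 0 := by simp
  have h2 : 2 / 3 + 1 / 3 * cos (π / 2) ^ r ≠ 0 := by simp [hr.ne']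
  have h3 : ContinuousAt (fun x => cos x ^ r) (π / 2) :=
      continuous_cos.continuousAt.rpow_const (Or.inr hr.le)
  have c : ContinuousAt (fF r) (π / 2) :=
    ((continuous_sin.continuousAt.log h1).sub (continuousAt_id.log (by simp [hp.ne']))).sub (continuousAt_const.mul
      ((continuousAt_const.add (continuousAt_const.mul h3)).log h2))
  have t := c.tendsto.mono_left (nhdsWithin_le_nhds (s := Iio (π / 2)))
  have e : fF r (π / 2) = -log (π / 2) - 1 / r * log (2 / 3) := by
    unfold fF
    simp [hr.ne']
  rwa [e] at t

theorem left_tendsto {f : ℝ → ℝ} {f' x : ℝ} (h : HasDerivAt f f' x) : Tendsto f (𝓝[<] x) (𝓝 (f x)) :=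
  h.continuousAt.tendsto.mono_left nhdsWithin_le_nhds
theorem right_tendsto {f : ℝ → ℝ} {f' x : ℝ} (h : HasDerivAt f f' x) : Tendsto f (𝓝[>] x) (𝓝 (f x)) :=
  h.continuousAt.tendsto.mono_left nhdsWithin_le_nhds

theorem denF_pos (r : ℝ) {x : ℝ} (hx : x ∈ Ioo 0 (π / 2)) : 0 < x * sin x * (2 + cos x ^ r) := by
  have hx0 := hx.1
  have hc : 0 < cos x := cos_pos_of_mem_Ioo ⟨by linarith [hx.1, pi_pos], hx.2⟩
  have hs : 0 < sin x := sin_pos_of_pos_of_lt_pi hx.1 (by linarith [hx.1, hx.2, pi_pos])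
  have hp : 0 < cos x ^ r := rpow_pos_of_pos hc r
  positivity

theorem tan_pos' {x : ℝ} (hx : x ∈ Ioo 0 (π / 2)) : 0 < sin x / cos x := by
  have hc : 0 < cos x := cos_pos_of_mem_Ioo ⟨by linarith [hx.1, pi_pos], hx.2⟩
  have hs : 0 < sin x := sin_pos_of_pos_of_lt_pi hx.1 (by linarith [hx.1, hx.2, pi_pos])
  positivity

theorem fF_pos {x : ℝ} (hx : x ∈ Ioo 0 (π / 2)) : 0 < fF (4 / 5) x := by
  by_contra! hneg
  obtain ⟨y, hy, e⟩ := slope_lim hx.1 (fun z hz => hasDerivAt_fF (r := 4 / 5) (by norm_num) ⟨hz.1, hz.2.trans hx.2⟩)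
    (fF_tendsto_zero (by norm_num)) (left_tendsto (hasDerivAt_fF (by norm_num) hx))
  have hy' : y ∈ Ioo 0 (π / 2) := ⟨hy.1, hy.2.trans hx.2⟩
  have hG : fG (4 / 5) y ≤ 0 := by
    by_contra! h
    rw [fG_pos_iff hy'] at h
    have : 0 < (x - 0) * ((cos y ^ ((4 : ℝ) / 5 - 1) * fB y - 2 * fA y) / (y * sin y * (2 + cos y ^ ((4 : ℝ) / 5)))) :=
      mul_pos (by linarith [hx.1]) (div_pos (by linarith) (denF_pos _ hy'))
    linarith
  obtain ⟨z, hz, e⟩ := slope_lim hy.1 (fun z hz => hasDerivAt_fG (4 / 5) ⟨hz.1, hz.2.trans hy'.2⟩)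
    (fG_tendsto _) (left_tendsto (hasDerivAt_fG _ hy'))
  have hz' : z ∈ Ioo 0 (π / 2) := ⟨hz.1, hz.2.trans hy'.2⟩
  have := fh_lt hz'.1 hz'.2
  have : 0 < (y - 0) * (sin z / cos z * (1 - 4 / 5 - fh z)) :=
    mul_pos (by linarith [hy.1]) (mul_pos (tan_pos' hz') (by linarith))
  linarith

/-- If `4/5 < r` then `fF r` takes a nonpositive value. -/
theorem fF_nonpos {r : ℝ} (hr : 4 / 5 < r) : ∃ x ∈ Ioo 0 (π / 2), fF r x ≤ 0 := by
  have hr0 : 0 < r := by linarith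
  obtain ⟨x, hx0, hx1, hxr⟩ : ∃ x : ℝ, 0 < x ∧ x < 1 ∧ 2 * x ^ 2 < r - 4 / 5 := by
    refine ⟨min (1 / 2) ((r - 4 / 5) / 2), lt_min (by norm_num) (by linarith), (min_le_left _ _).trans_lt (by norm_num), ?_⟩
    have h1 := min_le_left (1 / 2) ((r - 4 / 5) / 2)
    have h2 := min_le_right (1 / 2) ((r - 4 / 5) / 2)
    have h3 : 0 < min (1 / 2) ((r - 4 / 5) / 2) := lt_min (by norm_num) (by linarith)
    nlinarith
  have hx : x ∈ Ioo 0 (π / 2) := ⟨hx0, by linarith [pi_gt_three]⟩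
  refine ⟨x, hx, ?_⟩
  by_contra! hneg
  obtain ⟨y, hy, e⟩ := slope_lim hx.1 (fun z hz => hasDerivAt_fF hr0 ⟨hz.1, hz.2.trans hx.2⟩)
    (fF_tendsto_zero hr0) (left_tendsto (hasDerivAt_fF hr0 hx))
  have hy' : y ∈ Ioo 0 (π / 2) := ⟨hy.1, hy.2.trans hx.2⟩
  have hG : 0 ≤ fG r y := by
    by_contra! h
    rw [fG_neg_iff hy'] at h
    have : (x - 0) * ((cos y ^ (r - 1) * fB y - 2 * fA y) / (y * sin y * (2 + cos y ^ r))) < 0 :=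
      mul_neg_of_pos_of_neg (by linarith [hx.1]) (div_neg_of_neg_of_pos (by linarith) (denF_pos _ hy'))
    linarith
  obtain ⟨z, hz, e⟩ := slope_lim hy.1 (fun z hz => hasDerivAt_fG r ⟨hz.1, hz.2.trans hy'.2⟩)
    (fG_tendsto _) (left_tendsto (hasDerivAt_fG _ hy'))
  have hz' : z ∈ Ioo 0 (π / 2) := ⟨hz.1, hz.2.trans hy'.2⟩
  have hzx : z < x := hz.2.trans hy.2
  have h1 := fh_gt hz.1 (hzx.trans hx1)
  have h2 : z ^ 2 < x ^ 2 := by have := hz.1; gcongr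
  have : (y - 0) * (sin z / cos z * (1 - r - fh z)) < 0 :=
    mul_neg_of_pos_of_neg (by linarith [hy.1]) (mul_neg_of_pos_of_neg (tan_pos' hz') (by linarith))
  linarith

theorem fF_neg {r : ℝ} (hr : 0 < r) (he : -log (π / 2) - 1 / r * log (2 / 3) = 0)
    {x : ℝ} (hx : x ∈ Ioo 0 (π / 2)) : fF r x < 0 := by
  by_contra! hneg
  obtain ⟨y, hy, e⟩ := slope_lim hx.1 (fun z hz => hasDerivAt_fF hr ⟨hz.1, hz.2.trans hx.2⟩)
    (fF_tendsto_zero hr) (left_tendsto (hasDerivAt_fF hr hx))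
  obtain ⟨w, hw, e'⟩ := slope_lim hx.2 (fun z hz => hasDerivAt_fF hr ⟨hx.1.trans hz.1, hz.2⟩)
    (right_tendsto (hasDerivAt_fF hr hx)) (fF_tendsto_half hr)
  rw [he] at e'
  have hy' : y ∈ Ioo 0 (π / 2) := ⟨hy.1, hy.2.trans hx.2⟩
  have hw' : w ∈ Ioo 0 (π / 2) := ⟨hx.1.trans hw.1, hw.2⟩
  have hyw : y < w := hy.2.trans hw.1
  have hG : 0 ≤ fG r y := by
    by_contra! h
    rw [fG_neg_iff hy'] at h
    have : (x - 0) * ((cos y ^ (r - 1) * fB y - 2 * fA y) / (y * sin y * (2 + cos y ^ r))) < 0 :=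
      mul_neg_of_pos_of_neg (by linarith [hx.1]) (div_neg_of_neg_of_pos (by linarith) (denF_pos _ hy'))
    linarith
  have hG' : fG r w ≤ 0 := by
    by_contra! h
    rw [fG_pos_iff hw'] at h
    have : 0 < (π / 2 - x) * ((cos w ^ (r - 1) * fB w - 2 * fA w) / (w * sin w * (2 + cos w ^ r))) :=
      mul_pos (by linarith [hx.2]) (div_pos (by linarith) (denF_pos _ hw'))
    linarith
  obtain ⟨z, hz, e1⟩ := slope_lim hy.1 (fun z hz => hasDerivAt_fG r ⟨hz.1, hz.2.trans hy'.2⟩)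
    (fG_tendsto _) (left_tendsto (hasDerivAt_fG _ hy'))
  obtain ⟨v, hv, e2⟩ := slope_lim hyw (fun z hz => hasDerivAt_fG r ⟨hy.1.trans hz.1, hz.2.trans hw'.2⟩)
    (right_tendsto (hasDerivAt_fG _ hy')) (left_tendsto (hasDerivAt_fG _ hw'))
  have hz' : z ∈ Ioo 0 (π / 2) := ⟨hz.1, hz.2.trans hy'.2⟩
  have hv' : v ∈ Ioo 0 (π / 2) := ⟨hy.1.trans hv.1, hv.2.trans hw'.2⟩
  have hzv : z < v := hz.2.trans hv.1
  have hh := fh_anti hz' hv' hzv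
  have i1 : fh z ≤ 1 - r := by
    by_contra! h
    have : (y - 0) * (sin z / cos z * (1 - r - fh z)) < 0 :=
      mul_neg_of_pos_of_neg (by linarith [hy.1]) (mul_neg_of_pos_of_neg (tan_pos' hz') (by linarith))
    linarith
  have i2 : 1 - r ≤ fh v := by
    by_contra! h
    have : 0 < (w - y) * (sin v / cos v * (1 - r - fh v)) :=
      mul_pos (by linarith) (mul_pos (tan_pos' hv') (by linarith))
    linarith
  linarith

theorem log_M {r b : ℝ} (hr : 0 < r) (hb : 0 < b) :
    0 < weightedPowerMean r 1 b ∧ log (weightedPowerMean r 1 b) = 1 / r * log (2 / 3 + 1 / 3 * b ^ r) := by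
  have : 0 < b ^ r := rpow_pos_of_pos hb r
  have h : weightedPowerMean r 1 b = (2 / 3 + 1 / 3 * b ^ r) ^ (1 / r) := by
    simp [weightedPowerMean, hr.ne']
  rw [h]
  exact ⟨by positivity, log_rpow (by positivity) _⟩

theorem fF_eq {r x : ℝ} (hr : 0 < r) (hx : x ∈ Ioo 0 (π / 2)) :
    fF r x = log (sin x / x) - log (weightedPowerMean r 1 (cos x)) := by
  have hc : 0 < cos x := cos_pos_of_mem_Ioo ⟨by linarith [hx.1, pi_pos], hx.2⟩
  have hs : 0 < sin x := sin_pos_of_pos_of_lt_pi hx.1 (by linarith [hx.1, hx.2, pi_pos])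
  rw [(log_M hr hc).2, log_div hs.ne' hx.1.ne']; rfl

theorem lower_iff {r x : ℝ} (hr : 0 < r) (hx : x ∈ Ioo 0 (π / 2)) :
    weightedPowerMean r 1 (cos x) < sin x / x ↔ 0 < fF r x := by
  have hx0 := hx.1
  have hc : 0 < cos x := cos_pos_of_mem_Ioo ⟨by linarith [hx.1, pi_pos], hx.2⟩
  have hs : 0 < sin x := sin_pos_of_pos_of_lt_pi hx.1 (by linarith [hx.1, hx.2, pi_pos])
  rw [fF_eq hr hx, sub_pos, log_lt_log_iff (log_M hr hc).1 (by positivity)]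

theorem upper_iff {r x : ℝ} (hr : 0 < r) (hx : x ∈ Ioo 0 (π / 2)) :
    sin x / x < weightedPowerMean r 1 (cos x) ↔ fF r x < 0 := by
  have hx0 := hx.1
  have hc : 0 < cos x := cos_pos_of_mem_Ioo ⟨by linarith [hx.1, pi_pos], hx.2⟩
  have hs : 0 < sin x := sin_pos_of_pos_of_lt_pi hx.1 (by linarith [hx.1, hx.2, pi_pos])
  rw [fF_eq hr hx, sub_neg, log_lt_log_iff (by positivity) (log_M hr hc).1]

theorem gm_le {b : ℝ} (hb : 0 < b) (r : ℝ) : (b ^ ((1 : ℝ) / 3)) ^ r ≤ 2 / 3 + 1 / 3 * b ^ r := by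
  have := geom_mean_le_arith_mean2_weighted (w₁ := 2 / 3) (w₂ := 1 / 3) (p₁ := 1) (p₂ := b ^ r)
    (by norm_num) (by norm_num) (by norm_num) (rpow_pos_of_pos hb r).le (by norm_num)
  rw [one_rpow, one_mul, mul_one] at this
  rwa [← rpow_mul hb.le, mul_comm, rpow_mul hb.le]

theorem M_mono {r s b : ℝ} (hs : 0 < s) (hrs : r ≤ s) (hb : 0 < b) :
    weightedPowerMean r 1 b ≤ weightedPowerMean s 1 b := by
  have hbr : 0 < b ^ r := rpow_pos_of_pos hb r
  have hbs : 0 < b ^ s := rpow_pos_of_pos hb s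
  have hs' : weightedPowerMean s 1 b = (2 / 3 + 1 / 3 * b ^ s) ^ (1 / s) := by
    simp [weightedPowerMean, hs.ne']
  have h3 : 0 < b ^ ((1 : ℝ) / 3) := rpow_pos_of_pos hb _
  have hG : b ^ ((1 : ℝ) / 3) ≤ weightedPowerMean s 1 b := by
    rw [hs']
    have := rpow_le_rpow (by positivity) (gm_le hb s) (by positivity : 0 ≤ 1 / s)
    rwa [← rpow_mul h3.le, mul_one_div_cancel hs.ne', rpow_one] at this
  rcases lt_trichotomy r 0 with h | h | h
  · refine le_trans ?_ hG
    have hr' : weightedPowerMean r 1 b = (2 / 3 + 1 / 3 * b ^ r) ^ (1 / r) := by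
      simp [weightedPowerMean, h.ne]
    rw [hr']
    have := rpow_le_rpow_of_nonpos (by positivity) (gm_le hb r) (one_div_nonpos.2 h.le)
    rwa [← rpow_mul h3.le, mul_one_div_cancel h.ne, rpow_one] at this
  · refine le_trans (le_of_eq ?_) hG
    simp [weightedPowerMean, h]
  · have hr' : weightedPowerMean r 1 b = (2 / 3 + 1 / 3 * b ^ r) ^ (1 / r) := by
      simp [weightedPowerMean, h.ne']
    rw [hr', hs']
    have := arith_mean_le_rpow_mean (Finset.univ : Finset (Fin 2)) ![2 / 3, 1 / 3] ![1, b ^ r]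
      (by intro i _; fin_cases i <;> norm_num) (by norm_num [Fin.sum_univ_two])
      (by intro i _; fin_cases i <;> simp [hbr.le]) (p := s / r) (by rwa [one_le_div h])
    simp [Fin.sum_univ_two] at this
    rw [← rpow_mul hb.le, mul_div_cancel₀ _ h.ne'] at this
    have := rpow_le_rpow (by positivity) this (by positivity : 0 ≤ 1 / r)
    rw [← rpow_mul (by positivity)] at this
    have e : r / s * (1 / r) = 1 / s := by field_simp
    rw [e] at this
    simpa using this

theorem powerMean_sin_bounds (α β : ℝ) :
    (∀ x ∈ Ioo (0 : ℝ) (π / 2),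
        weightedPowerMean α 1 (cos x) < sin x / x ∧
          sin x / x < weightedPowerMean β 1 (cos x)) ↔
      (α ≤ 4 / 5 ∧ β ≥ (Real.log 3 - Real.log 2) / (Real.log π - Real.log 2)) := by
  have hl1 : 0 < Real.log 3 - Real.log 2 := by
    have := log_lt_log (by norm_num : (0 : ℝ) < 2) (by norm_num : (2 : ℝ) < 3); linarith
  have hl2 : 0 < Real.log π - Real.log 2 := by
    have := log_lt_log (by norm_num : (0 : ℝ) < 2) (by linarith [pi_gt_three] : (2 : ℝ) < π); linarith
  have hq1 : Real.log (π / 2) = Real.log π - Real.log 2 := log_div pi_ne_zero (by norm_num)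
  have hq2 : Real.log (2 / 3) = -(Real.log 3 - Real.log 2) := by
    rw [log_div (by norm_num) (by norm_num)]; ring
  set β₀ := (Real.log 3 - Real.log 2) / (Real.log π - Real.log 2) with hβ
  have hβ0 : 0 < β₀ := div_pos hl1 hl2
  have hcos : ∀ x ∈ Ioo (0 : ℝ) (π / 2), 0 < cos x := fun x hx =>
    cos_pos_of_mem_Ioo ⟨by linarith [hx.1, pi_pos], hx.2⟩
  constructor
  · intro h
    constructor
    · by_contra! hα
      obtain ⟨x, hx, hF⟩ := fF_nonpos hα
      have := (lower_iff (by linarith) hx).1 (h x hx).1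
      linarith
    · by_contra! hlt
      obtain ⟨s, hs1, hs2⟩ := exists_between (max_lt hlt hβ0)
      have hs0 : 0 < s := (le_max_right _ _).trans_lt hs1
      have hβs : β ≤ s := (le_max_left _ _).trans hs1.le
      have hF : ∀ x ∈ Ioo (0 : ℝ) (π / 2), fF s x < 0 := fun x hx =>
        (upper_iff hs0 hx).1 ((h x hx).2.trans_le (M_mono hs0 hβs (hcos x hx)))
      have hle := le_of_tendsto (fF_tendsto_half hs0) (by
        filter_upwards [Ioo_mem_nhdsLT (by positivity : (0 : ℝ) < π / 2)] with x hx
        exact (hF x hx).le)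
      rw [hq1, hq2] at hle
      rw [hβ, lt_div_iff₀ hl2] at hs2
      have : 1 / s * -(Real.log 3 - Real.log 2) = -((Real.log 3 - Real.log 2) / s) := by ring
      rw [this] at hle
      have : (Real.log 3 - Real.log 2) / s ≤ Real.log π - Real.log 2 := by linarith
      rw [div_le_iff₀ hs0] at this
      linarith
  · rintro ⟨hα, hβ'⟩ x hx
    constructor
    · exact (M_mono (by norm_num) hα (hcos x hx)).trans_lt ((lower_iff (by norm_num) hx).2 (fF_pos hx))
    · refine ((upper_iff hβ0 hx).2 (fF_neg hβ0 ?_ hx)).trans_le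
        (M_mono (hβ0.trans_le hβ') hβ' (hcos x hx))
      rw [hq1, hq2, hβ]
      field_simp
      ring
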